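/- Fix an integer n ≥ 1, p ∈ (1,∞) with p' = p/(p−1), and ε with 1/p' < ε < 1. Then ∫_{supp(w)} f^{p'} w^{1−p'} dx = Σ_{k=3}^∞ k^{−ε p'} < ∞, while ∫_{supp(w)} (T_S f)^{p'} w^{1−p'} dx = ∞. -/

import Mathlib

open MeasureTheory Set ENNReal

noncomputable section

/-- The half-open axis-parallel cube with corner `a` and side length `l`. -/
def Cube (n : ℕ) (a : Fin n → ℝ) (l : ℝ) : Set (Fin n → ℝ) :=
  Set.univ.pi fun i => Set.Ico (a i) (a i + l)

/-- The uncentered Hardy–Littlewood maximal function over axis-parallel cubes: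
`Mg(x) = sup_{Q ∋ x} |Q|⁻¹ ∫_Q g`. -/
def MaxFn {n : ℕ} (g : (Fin n → ℝ) → ℝ≥0∞) (x : Fin n → ℝ) : ℝ≥0∞ :=
  ⨆ (a : Fin n → ℝ) (l : ℝ) (_ : 0 < l) (_ : x ∈ Cube n a l),
    (volume (Cube n a l))⁻¹ * ∫⁻ y in Cube n a l, g y

/-- The cube of the sparse family `S` with parameters `k, N`:
`[0, 2^{-N})^n` for `k = 0` and `[2^k, 2^k + 2^{-N})^n` for `k ≥ 1`. -/
def sCube (n k N : ℕ) : Set (Fin n → ℝ) :=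
  Cube n (fun _ => if k = 0 then 0 else (2:ℝ)^k) ((2:ℝ)^(-(N:ℤ)))

/-- The sparse operator `T_S g = Σ_{Q ∈ S} (|Q|⁻¹ ∫_Q g) 1_Q`. -/
def TS {n : ℕ} (g : (Fin n → ℝ) → ℝ≥0∞) (x : Fin n → ℝ) : ℝ≥0∞ :=
  ∑' q : ℕ × ℕ,
    (sCube n q.1 q.2).indicator
      (fun _ => (volume (sCube n q.1 q.2))⁻¹ * ∫⁻ y in sCube n q.1 q.2, g y) x

/-- The `j`-th digit (for `j ≥ 1`) of `t ∈ [0,1)` in base `2^k`, using the expansion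
which is not eventually constant `2^k - 1`. -/
def digit (k j : ℕ) (t : ℝ) : ℤ := ⌊t * 2^(k*j)⌋ % 2^k

/-- `Ω_m(k) ⊆ [0,1)^n`: the points all of whose coordinates have base-`2^k` digits
in `{0, …, 2^{k-1}-1}` for `1 ≤ j ≤ m-1`, with `m`-th digit equal to `2^{k-1}`. -/
def Omega (n k m : ℕ) : Set (Fin n → ℝ) :=
  {x | (∀ i, x i ∈ Set.Ico (0:ℝ) 1) ∧
    ∀ i, (∀ j, 1 ≤ j → j < m → digit k j (x i) < 2^(k-1)) ∧
      digit k m (x i) = 2^(k-1)}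

/-- The weight `w_k = Σ_{m ≥ 1} (2^{kn}/(2^{(k-1)n}+1))^m 1_{Ω_m(k)}`. -/
def wk (n k : ℕ) : (Fin n → ℝ) → ℝ≥0∞ := fun x =>
  ∑' m : ℕ,
    (Omega n k (m+1)).indicator
      (fun _ => ((2:ℝ≥0∞)^(k*n) / ((2:ℝ≥0∞)^((k-1)*n) + 1))^(m+1)) x

/-- `Q_1^m(k) = [2^{-k(m-1)-1}, 2^{-k(m-1)-1} + 2^{-km})^n`. -/
def Q1 (n k m : ℕ) : Set (Fin n → ℝ) :=
  Cube n (fun _ => (2:ℝ)^(-(k*(m-1) : ℤ) - 1)) ((2:ℝ)^(-(k*m : ℤ)))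

/-- `Γ(k) = ⋃_{m ≥ 3} Q_1^m(k)`. -/
def Gamma (n k : ℕ) : Set (Fin n → ℝ) := ⋃ m : ℕ, Q1 n k (m+3)

/-- `A_k = 2^{(k-1)n} (2^{(k-1)n}+1)^2`. -/
def Ak (n k : ℕ) : ℝ≥0∞ := 2^((k-1)*n) * (2^((k-1)*n) + 1)^2

/-- The weight `w(x) = Σ_{k ≥ 3} A_k w_k(x - 2⃗^k) 1_{Γ(k)}(x - 2⃗^k)`. -/
def bigW (n : ℕ) : (Fin n → ℝ) → ℝ≥0∞ := fun x =>
  ∑' k : ℕ,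
    (Gamma n (k+3)).indicator (fun z => Ak n (k+3) * wk n (k+3) z)
      (fun i => x i - (2:ℝ)^(k+3))

/-- The test function `f(x) = Σ_{k ≥ 3} k^{-ε} A_k w_k(x - 2⃗^k)`. -/
def bigF (n : ℕ) (ε : ℝ) : (Fin n → ℝ) → ℝ≥0∞ := fun x =>
  ∑' k : ℕ,
    ((k+3 : ℝ≥0∞) ^ (-ε)) * Ak n (k+3) * wk n (k+3) (fun i => x i - (2:ℝ)^(k+3))

/-- `T` is bounded from `L^p(v)` to `L^p(u)` (for nonnegative functions, which are
required to be supported in `supp v`): there is a finite constant `C` with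
`‖Tf‖_{L^p(u)} ≤ C ‖f‖_{L^p(v)}` for all `f ∈ L^p(v)`. -/
def BddOn {n : ℕ} (T : ((Fin n → ℝ) → ℝ≥0∞) → (Fin n → ℝ) → ℝ≥0∞)
    (p : ℝ) (v u : (Fin n → ℝ) → ℝ≥0∞) : Prop :=
  ∃ C : ℝ≥0∞, C ≠ ∞ ∧ ∀ f : (Fin n → ℝ) → ℝ≥0∞, Measurable f →
    (∀ x, v x = 0 → f x = 0) → (∫⁻ x, f x ^ p * v x) < ∞ →
    ∫⁻ x, T f x ^ p * u x ≤ C ^ p * ∫⁻ x, f x ^ p * v x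

/-- The dual weight `u^{1-p'} 1_{supp u}`. -/
def dualW {n : ℕ} (u : (Fin n → ℝ) → ℝ≥0∞) (q : ℝ) : (Fin n → ℝ) → ℝ≥0∞ :=
  fun x => if u x = 0 then 0 else u x ^ (1 - q)

/-- One-dimensional factor of `Omega`. -/
def D1 (k m : ℕ) : Set ℝ :=
  {t | t ∈ Set.Ico (0:ℝ) 1 ∧ (∀ j, 1 ≤ j → j < m → digit k j t < 2^(k-1)) ∧
      digit k m t = 2^(k-1)}

lemma Omega_eq (n k m : ℕ) : Omega n k m = Set.univ.pi (fun _ => D1 k m) := by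
  ext x
  simp only [Omega, D1, Set.mem_ofPred_eq, Set.mem_univ_pi]
  exact ⟨fun h i => ⟨h.1 i, h.2 i⟩, fun h => ⟨fun i => (h i).1, fun i => (h i).2⟩⟩

lemma digit_succ (k j : ℕ) (t : ℝ) : digit k (j+1) t = digit k j (2^k*t) := by
  unfold digit
  congr 2
  rw [mul_add, pow_add]; ring

lemma digit_fract (k j : ℕ) (hj : 1 ≤ j) (s : ℝ) : digit k j (Int.fract s) = digit k j s := by
  unfold digit
  obtain ⟨i, rfl⟩ : ∃ i, j = i + 1 := ⟨j-1, by omega⟩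
  have : Int.fract s * 2^(k*(i+1)) = s * 2^(k*(i+1)) - ((⌊s⌋ * 2^(k*(i+1)) : ℤ) : ℝ) := by
    push_cast
    rw [← Int.self_sub_floor]; ring
  rw [this, Int.floor_sub_intCast]
  have h2 : (⌊s⌋ * 2^(k*(i+1)) : ℤ) = 2^k * (⌊s⌋ * 2^(k*i)) := by
    rw [mul_add, pow_add]; ring
  rw [h2, Int.sub_mul_emod_self_left]

lemma digit_one (k : ℕ) (t : ℝ) (h0 : 0 ≤ t) (h1 : t < 1) : digit k 1 t = ⌊t * 2^k⌋ := by
  unfold digit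
  rw [mul_one]
  apply Int.emod_eq_of_lt
  · exact Int.floor_nonneg.2 (by positivity)
  · rw [Int.floor_lt]
    push_cast
    nlinarith [pow_pos (two_pos : (0:ℝ) < 2) k]

lemma two_pow_half (k : ℕ) (hk : 1 ≤ k) : (2:ℝ)^(k-1) = 2^k / 2 := by
  obtain ⟨i, rfl⟩ : ∃ i, k = i + 1 := ⟨k-1, by omega⟩
  simp [pow_succ]

lemma D1_one (k : ℕ) (hk : 1 ≤ k) : D1 k 1 = Set.Ico (1/2) (1/2 + ((2:ℝ)^k)⁻¹) := by
  have hp := pow_pos (two_pos : (0:ℝ) < 2) k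
  have h2 : (2:ℝ) ≤ 2^k := by
    calc (2:ℝ) = 2^1 := by norm_num
      _ ≤ 2^k := pow_le_pow_right₀ (by norm_num) hk
  have hinv : ((2:ℝ)^k)⁻¹ ≤ 1/2 := by
    rw [one_div]; exact inv_anti₀ (by norm_num) h2
  have key : ∀ t : ℝ, ⌊t * 2^k⌋ = 2^(k-1) ↔ t ∈ Set.Ico (1/2) (1/2 + ((2:ℝ)^k)⁻¹) := by
    intro t
    rw [Int.floor_eq_iff]
    push_cast
    rw [two_pow_half k hk, Set.mem_Ico]
    have e : ((2:ℝ)^k)⁻¹ * 2^k = 1 := inv_mul_cancel₀ hp.ne'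
    constructor
    · rintro ⟨a, b⟩
      constructor
      · nlinarith
      · by_contra hc
        push Not at hc
        nlinarith
    · rintro ⟨a, b⟩
      constructor <;> nlinarith
  ext t
  constructor
  · rintro ⟨h, -, h'⟩
    rw [digit_one k t h.1 h.2] at h'
    exact (key t).1 h'
  · intro h
    have h0 : 0 ≤ t := by linarith [h.1]
    have h1 : t < 1 := by linarith [h.2]
    refine ⟨⟨h0, h1⟩, fun j _ _ => by omega, ?_⟩
    rw [digit_one k t h0 h1]
    exact (key t).2 h

lemma D1_succ (k m : ℕ) (hk : 1 ≤ k) (hm : 1 ≤ m) (t : ℝ) :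
    t ∈ D1 k (m+1) ↔ 0 ≤ t ∧ t < 1/2 ∧ Int.fract (2^k*t) ∈ D1 k m := by
  have hp := pow_pos (two_pos : (0:ℝ) < 2) k
  have key : ⌊t * 2^k⌋ < 2^(k-1) ↔ t < 1/2 := by
    rw [Int.floor_lt]
    push_cast
    rw [two_pow_half k hk]
    constructor
    · intro h; by_contra hc; push Not at hc; nlinarith
    · intro h; nlinarith
  constructor
  · rintro ⟨⟨h0, h1⟩, hlt, he⟩
    refine ⟨h0, ?_, ⟨Int.fract_nonneg _, Int.fract_lt_one _⟩, ?_, ?_⟩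
    · have := hlt 1 le_rfl (by omega)
      rw [digit_one k t h0 h1] at this
      exact key.1 this
    · intro j hj hjm
      rw [digit_fract k j hj, ← digit_succ]
      exact hlt _ (by omega) (by omega)
    · rw [digit_fract k m hm, ← digit_succ]
      exact he
  · rintro ⟨h0, h1, -, hlt, he⟩
    refine ⟨⟨h0, by linarith⟩, ?_, ?_⟩
    · intro j hj hjm
      rcases Nat.lt_or_ge 1 j with h | h
      · obtain ⟨i, rfl⟩ : ∃ i, j = i + 1 := ⟨j-1, by omega⟩
        rw [digit_succ, ← digit_fract k i (by omega)]
        exact hlt i (by omega) (by omega)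
      · obtain rfl : j = 1 := by omega
        rw [digit_one k t h0 (by linarith)]
        exact key.2 h1
    · rw [digit_succ, ← digit_fract k m hm]
      exact he

lemma measurable_digit (k j : ℕ) : Measurable (digit k j) := by
  unfold digit
  exact (measurable_of_countable (fun z : ℤ => z % 2^k)).comp
    (Int.measurable_floor.comp (measurable_id.mul_const _))

lemma measurableSet_D1 (k m : ℕ) : MeasurableSet (D1 k m) := by
  unfold D1
  have h1 : MeasurableSet {t : ℝ | ∀ j, 1 ≤ j → j < m → digit k j t < 2^(k-1)} := by
    simp only [Set.ofPred_forall]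
    exact MeasurableSet.iInter fun j => MeasurableSet.iInter fun _ => MeasurableSet.iInter fun _ =>
      measurableSet_lt (measurable_digit k j) measurable_const
  exact measurableSet_Ico.inter
    (h1.inter (measurableSet_eq_fun (measurable_digit k m) measurable_const))

lemma measurableSet_Omega (n k m : ℕ) : MeasurableSet (Omega n k m) := by
  rw [Omega_eq]
  exact MeasurableSet.univ_pi fun _ => measurableSet_D1 k m

/-- Volume of the periodised set inside `[0, c 2^{-k})`. -/
lemma vol_periodic (k : ℕ) (D : Set ℝ) (hD : MeasurableSet D) (hD1 : D ⊆ Set.Ico 0 1) (c : ℕ) :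
    volume {t : ℝ | 0 ≤ t ∧ t < c * ((2:ℝ)^k)⁻¹ ∧ Int.fract (2^k*t) ∈ D}
      = c * ((2:ℝ≥0∞)^k)⁻¹ * volume D := by
  have hp := pow_pos (two_pos : (0:ℝ) < 2) k
  have e : ((2:ℝ)^k)⁻¹ * 2^k = 1 := inv_mul_cancel₀ hp.ne'
  have hpi := inv_pos.2 hp
  have piece : ∀ c : ℕ, volume ((fun t : ℝ => 2^k * t - c) ⁻¹' D) = ((2:ℝ≥0∞)^k)⁻¹ * volume D := by
    intro c
    have : (fun t : ℝ => 2^k * t - c) ⁻¹' D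
        = (fun t : ℝ => 2^k * t) ⁻¹' ((fun t : ℝ => t - c) ⁻¹' D) := rfl
    simp only [sub_eq_add_neg] at this ⊢
    rw [this, Real.volume_preimage_mul_left hp.ne', measure_preimage_add_right]
    congr 1
    rw [abs_of_pos hpi, ENNReal.ofReal_inv_of_pos hp, ENNReal.ofReal_pow (by norm_num)]
    simp
  induction c with
  | zero =>
    have : {t : ℝ | 0 ≤ t ∧ t < (0:ℕ) * ((2:ℝ)^k)⁻¹ ∧ Int.fract (2^k*t) ∈ D} = ∅ := by
      ext t; simp; intro a b; linarith
    rw [this]; simp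
  | succ c ih =>
    have hu : {t : ℝ | 0 ≤ t ∧ t < (c+1:ℕ) * ((2:ℝ)^k)⁻¹ ∧ Int.fract (2^k*t) ∈ D}
        = {t : ℝ | 0 ≤ t ∧ t < c * ((2:ℝ)^k)⁻¹ ∧ Int.fract (2^k*t) ∈ D}
          ∪ (fun t : ℝ => 2^k * t - c) ⁻¹' D := by
      ext t
      simp only [Set.mem_ofPred_eq, Set.mem_union, Set.mem_preimage]
      have hfr : 0 ≤ 2^k * t - c → 2^k*t - c < 1 → Int.fract (2^k*t) = 2^k*t - c := by
        intro h1 h2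
        rw [Int.fract_eq_iff]
        exact ⟨h1, h2, c, by simp⟩
      push_cast
      constructor
      · rintro ⟨h0, h1, h2⟩
        by_cases h : t < c * ((2:ℝ)^k)⁻¹
        · exact Or.inl ⟨h0, h, h2⟩
        · right
          push Not at h
          rwa [← hfr (by nlinarith) (by nlinarith)]
      · rintro (⟨h0, h1, h2⟩ | h)
        · exact ⟨h0, by nlinarith, h2⟩
        · have h' := hD1 h
          have a1 := h'.1
          have a2 := h'.2
          have a3 : (0:ℝ) ≤ c := Nat.cast_nonneg c
          refine ⟨by by_contra hc; push Not at hc; nlinarith, ?_, ?_⟩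
          · by_contra hc; push Not at hc; nlinarith
          · rwa [hfr a1 a2]
    have hd : Disjoint {t : ℝ | 0 ≤ t ∧ t < c * ((2:ℝ)^k)⁻¹ ∧ Int.fract (2^k*t) ∈ D}
        ((fun t : ℝ => 2^k * t - c) ⁻¹' D) := by
      rw [Set.disjoint_left]
      rintro t ⟨_, h1, _⟩ h
      have h' := (hD1 h).1
      nlinarith
    rw [hu, measure_union hd (by measurability), ih, piece]
    push_cast
    ring

lemma D1_sub (k m : ℕ) : D1 k m ⊆ Set.Ico 0 1 := fun _ h => h.1

lemma pow_inv_le_half (i : ℕ) (hi : 1 ≤ i) : ((2:ℝ)^i)⁻¹ ≤ 1/2 := by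
  rw [one_div]
  apply inv_anti₀ (by norm_num)
  calc (2:ℝ) = 2^1 := by norm_num
      _ ≤ 2^i := pow_le_pow_right₀ (by norm_num) hi

/-- `|D_{m+1} ∩ [0,2^{-i})| = 2^{-i} |D_m|` for `1 ≤ i ≤ k`. -/
lemma vol_D1_first (k m i : ℕ) (hm : 1 ≤ m) (hi : 1 ≤ i) (hik : i ≤ k) :
    volume (D1 k (m+1) ∩ Set.Ico 0 ((2:ℝ)^i)⁻¹) = ((2:ℝ≥0∞)^i)⁻¹ * volume (D1 k m) := by
  have hb : ((2:ℝ)^i)⁻¹ = ((2^(k-i) : ℕ):ℝ) * ((2:ℝ)^k)⁻¹ := by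
    obtain ⟨d, rfl⟩ := Nat.exists_eq_add_of_le hik
    push_cast
    rw [Nat.add_sub_cancel_left, pow_add]
    field_simp
  have : D1 k (m+1) ∩ Set.Ico 0 ((2:ℝ)^i)⁻¹
      = {t : ℝ | 0 ≤ t ∧ t < (2^(k-i) : ℕ) * ((2:ℝ)^k)⁻¹ ∧ Int.fract (2^k*t) ∈ D1 k m} := by
    ext t
    rw [Set.mem_inter_iff, D1_succ k m (by omega) hm, ← hb]
    have := pow_inv_le_half i hi
    simp only [Set.mem_Ico, Set.mem_ofPred_eq]
    constructor
    · rintro ⟨⟨a, b, c⟩, d, e⟩; exact ⟨a, e, c⟩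
    · rintro ⟨a, e, c⟩; exact ⟨⟨a, by linarith, c⟩, a, e⟩
  rw [this, vol_periodic k _ (measurableSet_D1 k m) (D1_sub k m)]
  congr 1
  obtain ⟨d, rfl⟩ := Nat.exists_eq_add_of_le hik
  push_cast
  rw [Nat.add_sub_cancel_left, pow_add, ENNReal.mul_inv (by simp) (by simp), mul_comm, mul_assoc,
    ENNReal.inv_mul_cancel (by simp) (by simp), mul_one]

lemma vol_D1 (k m : ℕ) (hk : 1 ≤ k) : volume (D1 k (m+1)) = ((2:ℝ≥0∞)^(k+m))⁻¹ := by
  induction m with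
  | zero =>
    rw [D1_one k hk, Real.volume_Ico]
    have hp := pow_pos (two_pos : (0:ℝ) < 2) k
    rw [add_sub_cancel_left, ENNReal.ofReal_inv_of_pos hp, ENNReal.ofReal_pow (by norm_num)]
    simp
  | succ m ih =>
    have := vol_D1_first k (m+1) 1 (by omega) le_rfl hk
    have h2 : D1 k (m+1+1) ∩ Set.Ico 0 ((2:ℝ)^1)⁻¹ = D1 k (m+1+1) := by
      apply Set.inter_eq_left.2
      intro t ht
      rw [D1_succ k (m+1) hk (by omega)] at ht
      exact ⟨ht.1, by have := ht.2.1; norm_num at this ⊢; exact this⟩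
    rw [h2, ih] at this
    rw [this, ← ENNReal.mul_inv (by simp) (by simp), ← pow_add]
    congr 2; omega

lemma vol_D1_step (k m N : ℕ) (hk : 1 ≤ k) (hm : 1 ≤ m) :
    volume (D1 k (m+1) ∩ Set.Ico 0 ((2:ℝ)^(k+N))⁻¹)
      = ((2:ℝ≥0∞)^k)⁻¹ * volume (D1 k m ∩ Set.Ico 0 ((2:ℝ)^N)⁻¹) := by
  have hp := pow_pos (two_pos : (0:ℝ) < 2) k
  have hN := pow_pos (two_pos : (0:ℝ) < 2) N
  have : D1 k (m+1) ∩ Set.Ico 0 ((2:ℝ)^(k+N))⁻¹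
      = (fun t : ℝ => 2^k * t) ⁻¹' (D1 k m ∩ Set.Ico 0 ((2:ℝ)^N)⁻¹) := by
    ext t
    rw [Set.mem_inter_iff, D1_succ k m hk hm]
    have hh := pow_inv_le_half (k+N) (by omega)
    have h1 : t < ((2:ℝ)^(k+N))⁻¹ ↔ 2^k * t < ((2:ℝ)^N)⁻¹ := by
      rw [pow_add, mul_inv, ← div_eq_inv_mul, lt_div_iff₀' hp]
    have h3 : ((2:ℝ)^N)⁻¹ ≤ 1 := inv_le_one_of_one_le₀ (one_le_pow₀ (by norm_num))
    have h0 : 0 ≤ 2^k * t ↔ 0 ≤ t := by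
      constructor
      · intro h; by_contra hc; push Not at hc; nlinarith
      · intro h; positivity
    simp only [Set.mem_Ico, Set.mem_preimage, Set.mem_inter_iff]
    rw [h1, h0]
    constructor
    · rintro ⟨⟨a, b, c⟩, d, e⟩
      refine ⟨?_, a, e⟩
      rwa [Int.fract_eq_self.2 ⟨h0.2 a, by linarith⟩] at c
    · rintro ⟨c, a, e⟩
      refine ⟨⟨a, by have := h1.2 e; linarith, ?_⟩, a, e⟩
      rwa [Int.fract_eq_self.2 ⟨h0.2 a, by linarith⟩]
  rw [this, Real.volume_preimage_mul_left hp.ne']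
  congr 1
  rw [abs_of_pos (inv_pos.2 hp), ENNReal.ofReal_inv_of_pos hp, ENNReal.ofReal_pow (by norm_num)]
  simp

lemma vol_D1_gen (k j l i : ℕ) (hi : 1 ≤ i) (hik : i ≤ k) :
    volume (D1 k (j+1+l+1) ∩ Set.Ico 0 ((2:ℝ)^(k*j+i))⁻¹)
      = ((2:ℝ≥0∞)^(k*j+i))⁻¹ * ((2:ℝ≥0∞)^(k+l))⁻¹ := by
  induction j with
  | zero =>
    have := vol_D1_first k (l+1) i (by omega) hi hik
    rw [vol_D1 k l (by omega)] at this
    convert this using 4 <;> simp <;> omega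
  | succ j ih =>
    have := vol_D1_step k (j+1+l+1) (k*j+i) (by omega) (by omega)
    rw [ih] at this
    have e : k*(j+1)+i = k+(k*j+i) := by ring
    have e2 : j+1+1+l+1 = j+1+l+1+1 := by ring
    rw [e, e2, this, pow_add 2 k (k*j+i), ENNReal.mul_inv (by simp) (by simp), mul_assoc]

/-- `Q_1^m` in one dimension sits in `D_m`. -/
lemma Q1_sub_D1 (k m : ℕ) (hk : 1 ≤ k) :
    Set.Ico ((2:ℝ)^(k*m+1))⁻¹ (((2:ℝ)^(k*m+1))⁻¹ + ((2:ℝ)^(k*(m+1)))⁻¹) ⊆ D1 k (m+1) := by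
  have hp := pow_pos (two_pos : (0:ℝ) < 2) k
  induction m with
  | zero =>
    rw [D1_one k hk]; simp
  | succ m ih =>
    intro t ht
    have e1 : ((2:ℝ)^(k*(m+1)+1))⁻¹ = ((2:ℝ)^k)⁻¹ * ((2:ℝ)^(k*m+1))⁻¹ := by
      rw [← mul_inv, ← pow_add]; congr 2; ring
    have e2 : ((2:ℝ)^(k*(m+1+1)))⁻¹ = ((2:ℝ)^k)⁻¹ * ((2:ℝ)^(k*(m+1)))⁻¹ := by
      rw [← mul_inv, ← pow_add]; congr 2; ring
    rw [e1, e2, ← mul_add] at ht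
    have h1 : ((2:ℝ)^(k*m+1))⁻¹ ≤ 2^k * t := by
      have := ht.1
      rwa [← div_eq_inv_mul, div_le_iff₀' hp] at this
    have h2 : 2^k * t < ((2:ℝ)^(k*m+1))⁻¹ + ((2:ℝ)^(k*(m+1)))⁻¹ := by
      have := ht.2
      rwa [← div_eq_inv_mul, lt_div_iff₀' hp] at this
    have h3 := ih ⟨h1, h2⟩
    have h4 := D1_sub _ _ h3
    have h5 := pow_inv_le_half k hk
    have e : ((2:ℝ)^k)⁻¹ * 2^k = 1 := inv_mul_cancel₀ hp.ne'
    rw [D1_succ k (m+1) hk (by omega), Int.fract_eq_self.2 h4]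
    refine ⟨?_, ?_, h3⟩
    · by_contra hc; push Not at hc; nlinarith [h4.1]
    · have := h4.2
      rw [← lt_div_iff₀' hp, one_div] at this
      linarith

/-- The ratio `r_k`. -/
def rk (n k : ℕ) : ℝ≥0∞ := (2:ℝ≥0∞)^(k*n) / ((2:ℝ≥0∞)^((k-1)*n) + 1)

lemma rk_eq (n k : ℕ) (hk : 1 ≤ k) :
    rk n k = (2:ℝ≥0∞)^((k-1)*n) * 2^n * ((2:ℝ≥0∞)^((k-1)*n) + 1)⁻¹ := by
  obtain ⟨i, rfl⟩ : ∃ i, k = i + 1 := ⟨k-1, by omega⟩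
  rw [rk, div_eq_mul_inv, ← pow_add]
  congr 2
  simp; ring

lemma rk_ne_zero (n k : ℕ) : rk n k ≠ 0 := by
  unfold rk
  exact ENNReal.div_ne_zero.2 ⟨by positivity, by simp⟩

lemma rk_ne_top (n k : ℕ) : rk n k ≠ ∞ := by
  unfold rk
  exact ENNReal.div_ne_top (by simp) (by simp)

lemma Ak_ne_zero (n k : ℕ) : Ak n k ≠ 0 := by
  unfold Ak; positivity

lemma Ak_ne_top (n k : ℕ) : Ak n k ≠ ∞ := by
  unfold Ak
  exact ENNReal.mul_ne_top (by simp) (by simp)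

lemma s_facts (M : ℝ≥0∞) (hM : M ≠ ∞) :
    (M+1) * (M+1)⁻¹ = 1 ∧ 1 - M * (M+1)⁻¹ = (M+1)⁻¹ ∧ 1 - (M+1)⁻¹ = M * (M+1)⁻¹ := by
  have h : (M+1) * (M+1)⁻¹ = 1 := ENNReal.mul_inv_cancel (by simp) (by simp [hM])
  have hs : (M+1)⁻¹ ≠ ∞ := by simp
  have h' : M * (M+1)⁻¹ + (M+1)⁻¹ = 1 := by
    refine Eq.trans ?_ h
    rw [add_mul, one_mul]
  refine ⟨h, ?_, ?_⟩
  · nth_rewrite 1 [← h']; exact ENNReal.add_sub_cancel_left (ENNReal.mul_ne_top hM hs)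
  · nth_rewrite 1 [← h']; exact ENNReal.add_sub_cancel_right hs

lemma geom1 (n k : ℕ) (hk : 1 ≤ k) :
    ∑' l : ℕ, rk n k^(l+1) * (((2:ℝ≥0∞)^(k+l))⁻¹)^n = 1 := by
  have hM : (2:ℝ≥0∞)^((k-1)*n) ≠ ∞ := by simp
  have hterm : ∀ l : ℕ, rk n k^(l+1) * (((2:ℝ≥0∞)^(k+l))⁻¹)^n
      = ((2:ℝ≥0∞)^((k-1)*n) * ((2:ℝ≥0∞)^((k-1)*n) + 1)⁻¹)^l
        * ((2:ℝ≥0∞)^((k-1)*n) + 1)⁻¹ := by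
    intro l
    have e : ((2:ℝ≥0∞)^(k+l))^n = (2:ℝ≥0∞)^((k-1)*n) * 2^n * (2^n)^l := by
      obtain ⟨i, rfl⟩ : ∃ i, k = i + 1 := ⟨k-1, by omega⟩
      rw [← pow_mul, ← pow_mul, ← pow_add, ← pow_add]
      congr 1; simp; ring
    rw [rk_eq n k hk, show (((2:ℝ≥0∞)^(k+l))⁻¹)^n = _ from ENNReal.inv_pow.symm, e]
    have hc : ((2:ℝ≥0∞)^((k-1)*n) * 2^n * (2^n)^l) * ((2:ℝ≥0∞)^((k-1)*n) * 2^n * (2^n)^l)⁻¹ = 1 :=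
      ENNReal.mul_inv_cancel (by positivity)
        (ENNReal.mul_ne_top (ENNReal.mul_ne_top (by simp) (by simp)) (by simp [ENNReal.pow_eq_top_iff]))
    generalize ((2:ℝ≥0∞)^((k-1)*n) * 2^n * (2^n)^l)⁻¹ = c at *
    generalize (2:ℝ≥0∞)^((k-1)*n) = M at *
    generalize (2:ℝ≥0∞)^n = P at *
    generalize (M+1)⁻¹ = s at *
    calc (M * P * s)^(l+1) * c = (M * P * P^l * c) * ((M*s)^l * s) := by ring
      _ = _ := by rw [hc, one_mul]
  obtain ⟨h1, h2, h3⟩ := s_facts _ hM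
  simp_rw [hterm]
  rw [ENNReal.tsum_mul_right, ENNReal.tsum_geometric, h2]
  exact ENNReal.inv_mul_cancel (by simp) (by simp)

lemma geom2 (n k : ℕ) (hk : 1 ≤ k) :
    ∑' m : ℕ, Ak n k * rk n k^(m+3) * (((2:ℝ≥0∞)^(k*(m+3)))⁻¹)^n = 1 := by
  have hM : (2:ℝ≥0∞)^((k-1)*n) ≠ ∞ := by simp
  have hM0 : (2:ℝ≥0∞)^((k-1)*n) ≠ 0 := by positivity
  obtain ⟨h1, h2, h3⟩ := s_facts _ hM
  have hterm : ∀ m : ℕ, Ak n k * rk n k^(m+3) * (((2:ℝ≥0∞)^(k*(m+3)))⁻¹)^n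
      = (((2:ℝ≥0∞)^((k-1)*n) + 1)⁻¹)^m *
       ((2:ℝ≥0∞)^((k-1)*n) * ((2:ℝ≥0∞)^((k-1)*n) + 1)⁻¹) := by
    intro m
    have e : ((2:ℝ≥0∞)^(k*(m+3)))^n = ((2:ℝ≥0∞)^(k*n))^(m+3) := by
      rw [← pow_mul, ← pow_mul]
      congr 1; ring
    have hc : ((2:ℝ≥0∞)^(k*n))^(m+3) * (((2:ℝ≥0∞)^(k*n))^(m+3))⁻¹ = 1 :=
      ENNReal.mul_inv_cancel (by positivity) (by simp [ENNReal.pow_eq_top_iff])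
    rw [rk, Ak, show (((2:ℝ≥0∞)^(k*(m+3)))⁻¹)^n = _ from ENNReal.inv_pow.symm, e, div_eq_mul_inv]
    generalize (((2:ℝ≥0∞)^(k*n))^(m+3))⁻¹ = c at *
    generalize (2:ℝ≥0∞)^((k-1)*n) = M at *
    generalize (2:ℝ≥0∞)^(k*n) = P at *
    generalize (M+1)⁻¹ = s at *
    calc M * (M+1)^2 * (P * s)^(m+3) * c = (P^(m+3) * c) * ((M+1)*s)^2 * (s^m * (M * s)) := by ring
      _ = _ := by rw [hc, h1]; ring
  simp_rw [hterm]
  rw [ENNReal.tsum_mul_right, ENNReal.tsum_geometric, h3]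
  exact ENNReal.inv_mul_cancel (mul_ne_zero hM0 (by simp)) (ENNReal.mul_ne_top hM (by simp))

lemma rk_le (n k : ℕ) (hk : 1 ≤ k) : rk n k ≤ 2^n := by
  have hM : (2:ℝ≥0∞)^((k-1)*n) ≠ ∞ := by simp
  obtain ⟨h1, h2, h3⟩ := s_facts _ hM
  rw [rk_eq n k hk, mul_right_comm, ← h3]
  calc _ ≤ 1 * (2:ℝ≥0∞)^n := by gcongr; exact tsub_le_self
    _ = _ := one_mul _

lemma wk_on (n k m : ℕ) (hn : 1 ≤ n) (x : Fin n → ℝ) (hx : x ∈ Omega n k (m+1)) :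
    wk n k x = rk n k^(m+1) := by
  unfold wk
  rw [tsum_eq_single m]
  · rw [Set.indicator_of_mem hx]; rfl
  · intro m' hm'
    apply Set.indicator_of_notMem
    intro hx'
    have h1 := hx.2 ⟨0, hn⟩
    have h2 := hx'.2 ⟨0, hn⟩
    rcases Nat.lt_or_gt_of_ne hm' with h | h
    · have := h1.1 (m'+1) (by omega) (by omega)
      rw [h2.2] at this
      exact lt_irrefl _ this
    · have := h2.1 (m+1) (by omega) (by omega)
      rw [h1.2] at this
      exact lt_irrefl _ this

lemma wk_off (n k : ℕ) (x : Fin n → ℝ) (hx : ¬ ∀ i, x i ∈ Set.Ico (0:ℝ) 1) : wk n k x = 0 := by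
  unfold wk
  rw [ENNReal.tsum_eq_zero]
  intro m
  exact Set.indicator_of_notMem (fun h => hx h.1) _

lemma lint_wk (n k j i : ℕ) (hi : 1 ≤ i) (hik : i ≤ k) :
    (((2:ℝ≥0∞)^(k*j+i))⁻¹)^n * rk n k^(j+1)
      ≤ ∫⁻ y in Set.univ.pi (fun _ : Fin n => Set.Ico (0:ℝ) ((2:ℝ)^(k*j+i))⁻¹), wk n k y := by
  have hmeas : ∀ m : ℕ, Measurable ((Omega n k (m+1)).indicator
      (fun _ => ((2:ℝ≥0∞)^(k*n) / ((2:ℝ≥0∞)^((k-1)*n) + 1))^(m+1))) :=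
    fun m => measurable_const.indicator (measurableSet_Omega n k (m+1))
  unfold wk
  rw [lintegral_tsum (fun m => (hmeas m).aemeasurable)]
  have hinj : Function.Injective (fun l : ℕ => j+1+l) := fun a b h => by simpa using h
  refine le_trans ?_ (ENNReal.tsum_comp_le_tsum_of_injective hinj _)
  have hg := congrArg (fun z => (((2:ℝ≥0∞)^(k*j+i))⁻¹)^n * rk n k^(j+1) * z)
    (geom1 n k (by omega))
  simp only [mul_one] at hg
  rw [← ENNReal.tsum_mul_left] at hg
  rw [← hg]
  apply ENNReal.tsum_le_tsum
  intro l
  apply le_of_eq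
  rw [lintegral_indicator_const (measurableSet_Omega n k _),
    Measure.restrict_apply (measurableSet_Omega n k _), Omega_eq, ← Set.pi_inter_distrib,
    volume_pi_pi]
  simp only [vol_D1_gen k j l i hi hik, Finset.prod_const, Finset.card_univ, Fintype.card_fin]
  change _ = rk n k^(j+1+l+1) * _
  rw [mul_pow]
  ring

lemma Q1_eq (n k m : ℕ) : Q1 n k (m+1) = Set.univ.pi (fun _ : Fin n =>
    Set.Ico ((2:ℝ)^(k*m+1))⁻¹ (((2:ℝ)^(k*m+1))⁻¹ + ((2:ℝ)^(k*(m+1)))⁻¹)) := by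
  unfold Q1 Cube
  have e1 : (2:ℝ)^(-(k*(((m+1:ℕ):ℤ)-1) : ℤ) - 1) = ((2:ℝ)^(k*m+1))⁻¹ := by
    rw [← zpow_natCast, ← zpow_neg]; congr 1; push_cast; ring
  have e2 : (2:ℝ)^(-(k*((m+1:ℕ):ℤ) : ℤ)) = ((2:ℝ)^(k*(m+1)))⁻¹ := by
    rw [← zpow_natCast, ← zpow_neg]; congr 1
  rw [e1, e2]

lemma measurableSet_Q1 (n k m : ℕ) : MeasurableSet (Q1 n k m) := by
  unfold Q1 Cube
  exact MeasurableSet.univ_pi fun _ => measurableSet_Ico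

lemma ofReal_two_pow_inv (N : ℕ) : ENNReal.ofReal ((2:ℝ)^N)⁻¹ = ((2:ℝ≥0∞)^N)⁻¹ := by
  rw [ENNReal.ofReal_inv_of_pos (by positivity), ENNReal.ofReal_pow (by norm_num)]
  simp

lemma vol_Q1 (n k m : ℕ) : volume (Q1 n k (m+1)) = (((2:ℝ≥0∞)^(k*(m+1)))⁻¹)^n := by
  rw [Q1_eq, volume_pi_pi]
  simp only [Real.volume_Ico, add_sub_cancel_left, ofReal_two_pow_inv, Finset.prod_const,
    Finset.card_univ, Fintype.card_fin]

lemma Q1_sub_Omega (n k m : ℕ) (hk : 1 ≤ k) : Q1 n k (m+1) ⊆ Omega n k (m+1) := by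
  rw [Q1_eq, Omega_eq]
  exact Set.pi_mono fun _ _ => Q1_sub_D1 k m hk

/-- The translation by `2^k` in every coordinate. -/
def shift (n k : ℕ) (x : Fin n → ℝ) : Fin n → ℝ := fun i => x i - (2:ℝ)^k

lemma shift_mp (n k : ℕ) : MeasurePreserving (shift n k) volume volume :=
  measurePreserving_sub_right volume (fun _ : Fin n => (2:ℝ)^k)

lemma shift_unique (n k k' : ℕ) (hn : 1 ≤ n) (x : Fin n → ℝ)
    (h : ∀ i, shift n k x i ∈ Set.Ico (0:ℝ) 1) (h' : ∀ i, shift n k' x i ∈ Set.Ico (0:ℝ) 1) :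
    k = k' := by
  have a := h ⟨0, hn⟩
  have b := h' ⟨0, hn⟩
  simp only [shift, Set.mem_Ico] at a b
  have e1 : ((2^k : ℕ) : ℝ) < ((2^k' : ℕ) : ℝ) + 1 := by push_cast; linarith
  have e2 : ((2^k' : ℕ) : ℝ) < ((2^k : ℕ) : ℝ) + 1 := by push_cast; linarith
  have e1' : 2^k < 2^k' + 1 := by exact_mod_cast e1
  have e2' : 2^k' < 2^k + 1 := by exact_mod_cast e2
  have e3 : 2^k = 2^k' := by omega
  exact Nat.pow_right_injective le_rfl e3

/-- The piece `2^k + Q_1^m(k)`. -/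
def EE (n k m : ℕ) : Set (Fin n → ℝ) := shift n k ⁻¹' Q1 n k m

lemma measurableSet_EE (n k m : ℕ) : MeasurableSet (EE n k m) :=
  (shift_mp n k).measurable (measurableSet_Q1 n k m)

lemma vol_EE (n k m : ℕ) : volume (EE n k (m+1)) = (((2:ℝ≥0∞)^(k*(m+1)))⁻¹)^n := by
  rw [EE, (shift_mp n k).measure_preimage (measurableSet_Q1 n k _).nullMeasurableSet, vol_Q1]

lemma EE_unit (n k m : ℕ) (hk : 1 ≤ k) (x : Fin n → ℝ) (hx : x ∈ EE n k (m+1)) :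
    ∀ i, shift n k x i ∈ Set.Ico (0:ℝ) 1 := (Q1_sub_Omega n k m hk hx).1

lemma Gamma_unit (n k : ℕ) (hk : 1 ≤ k) (x : Fin n → ℝ) (hx : x ∈ Gamma n k) :
    ∀ i, x i ∈ Set.Ico (0:ℝ) 1 := by
  obtain ⟨m, hm⟩ := Set.mem_iUnion.1 hx
  exact (Q1_sub_Omega n k (m+2) hk hm).1

lemma bigW_on (n k m : ℕ) (hn : 1 ≤ n) (x : Fin n → ℝ) (hx : x ∈ EE n (k+3) (m+3)) :
    bigW n x = Ak n (k+3) * rk n (k+3)^(m+3) := by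
  have hu := EE_unit n (k+3) (m+2) (by omega) x hx
  unfold bigW
  rw [tsum_eq_single k]
  · change (Gamma n (k+3)).indicator _ (shift n (k+3) x) = _
    have hG : shift n (k+3) x ∈ Gamma n (k+3) := Set.mem_iUnion.2 ⟨m, hx⟩
    rw [Set.indicator_of_mem hG]
    rw [wk_on n (k+3) (m+2) hn _ (Q1_sub_Omega n (k+3) (m+2) (by omega) hx)]
  · intro k' hk'
    apply Set.indicator_of_notMem
    intro h
    have := shift_unique n (k+3) (k'+3) hn x hu (Gamma_unit n (k'+3) (by omega) _ h)
    omega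

lemma bigF_on (n k m : ℕ) (ε : ℝ) (hn : 1 ≤ n) (x : Fin n → ℝ) (hx : x ∈ EE n (k+3) (m+3)) :
    bigF n ε x = ((k:ℝ≥0∞)+3)^(-ε) * (Ak n (k+3) * rk n (k+3)^(m+3)) := by
  have hu := EE_unit n (k+3) (m+2) (by omega) x hx
  unfold bigF
  rw [tsum_eq_single k]
  · change _ * wk n (k+3) (shift n (k+3) x) = _
    rw [wk_on n (k+3) (m+2) hn _ (Q1_sub_Omega n (k+3) (m+2) (by omega) hx), mul_assoc]
  · intro k' hk'
    rw [wk_off, mul_zero]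
    intro h
    have := shift_unique n (k+3) (k'+3) hn x hu h
    omega

lemma supp_bigW (n : ℕ) (hn : 1 ≤ n) :
    {x | bigW n x ≠ 0} = ⋃ q : ℕ × ℕ, EE n (q.1+3) (q.2+3) := by
  ext x
  rw [Set.mem_iUnion]
  constructor
  · intro h
    by_contra hc
    push Not at hc
    apply h
    unfold bigW
    rw [ENNReal.tsum_eq_zero]
    intro k
    apply Set.indicator_of_notMem
    intro h2
    obtain ⟨m, hm⟩ := Set.mem_iUnion.1 h2
    exact hc (k, m) hm
  · rintro ⟨⟨k, m⟩, h⟩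
    change bigW n x ≠ 0
    rw [bigW_on n k m hn x h]
    exact mul_ne_zero (Ak_ne_zero _ _) (pow_ne_zero _ (rk_ne_zero _ _))

lemma lint_supp (n : ℕ) (hn : 1 ≤ n) (g : (Fin n → ℝ) → ℝ≥0∞) :
    ∫⁻ x in {x | bigW n x ≠ 0}, g x
      = ∑' k : ℕ, ∑' m : ℕ, ∫⁻ x in EE n (k+3) (m+3), g x := by
  rw [supp_bigW n hn, lintegral_iUnion (fun q => measurableSet_EE _ _ _)]
  · exact ENNReal.tsum_prod (f := fun k m : ℕ => ∫⁻ x in EE n (k+3) (m+3), g x)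
  rintro ⟨k, m⟩ ⟨k', m'⟩ hne
  rw [Function.onFun, Set.disjoint_left]
  intro x hx hx'
  apply hne
  simp only at hx hx'
  have hk := shift_unique n (k+3) (k'+3) hn x (EE_unit n _ (m+2) (by omega) x hx)
    (EE_unit n _ (m'+2) (by omega) x hx')
  obtain rfl : k = k' := by omega
  have h1 := (Q1_sub_Omega n (k+3) (m+2) (by omega) hx).2 ⟨0, hn⟩
  have h2 := (Q1_sub_Omega n (k+3) (m'+2) (by omega) hx').2 ⟨0, hn⟩
  rcases Nat.lt_trichotomy m m' with h | h | h
  · have := h2.1 (m+3) (by omega) (by omega)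
    rw [h1.2] at this
    exact absurd this (lt_irrefl _)
  · rw [h]
  · have := h1.1 (m'+3) (by omega) (by omega)
    rw [h2.2] at this
    exact absurd this (lt_irrefl _)

lemma sCube_eq (n k N : ℕ) (hk : 1 ≤ k) :
    sCube n k N = shift n k ⁻¹' Set.univ.pi (fun _ : Fin n => Set.Ico (0:ℝ) ((2:ℝ)^N)⁻¹) := by
  ext x
  have e : (2:ℝ)^(-(N:ℤ)) = ((2:ℝ)^N)⁻¹ := by rw [zpow_neg, zpow_natCast]
  simp only [sCube, Cube, shift, e, Set.mem_preimage, Set.mem_univ_pi, Set.mem_Ico,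
    if_neg (show k ≠ 0 by omega)]
  refine forall_congr' fun i => ?_
  constructor <;> rintro ⟨a, b⟩ <;> constructor <;> linarith

lemma vol_sCube (n k N : ℕ) (hk : 1 ≤ k) : volume (sCube n k N) = (((2:ℝ≥0∞)^N)⁻¹)^n := by
  rw [sCube_eq n k N hk, (shift_mp n k).measure_preimage
    (MeasurableSet.univ_pi fun _ => measurableSet_Ico).nullMeasurableSet, volume_pi_pi]
  simp only [Real.volume_Ico, sub_zero, ofReal_two_pow_inv, Finset.prod_const,
    Finset.card_univ, Fintype.card_fin]

lemma measurable_wk (n k : ℕ) : Measurable (wk n k) := by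
  unfold wk
  exact Measurable.tsum fun m =>
    measurable_const.indicator (measurableSet_Omega n k (m+1))

lemma avg_bigF (n k j i : ℕ) (ε : ℝ) (hi : 1 ≤ i) (hik : i ≤ k+3) :
    ((k:ℝ≥0∞)+3)^(-ε) * Ak n (k+3) * rk n (k+3)^(j+1) ≤
      (volume (sCube n (k+3) ((k+3)*j+i)))⁻¹ * ∫⁻ y in sCube n (k+3) ((k+3)*j+i), bigF n ε y := by
  have hv : volume (sCube n (k+3) ((k+3)*j+i)) ≠ 0 := by
    rw [vol_sCube n _ _ (by omega)]; exact pow_ne_zero _ (by simp)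
  have hv' : volume (sCube n (k+3) ((k+3)*j+i)) ≠ ∞ := by
    rw [vol_sCube n _ _ (by omega)]
    exact ENNReal.pow_ne_top (ENNReal.inv_ne_top.2 (by positivity))
  have h1 : ((k:ℝ≥0∞)+3)^(-ε) * Ak n (k+3) *
      ∫⁻ y in sCube n (k+3) ((k+3)*j+i), wk n (k+3) (shift n (k+3) y)
      ≤ ∫⁻ y in sCube n (k+3) ((k+3)*j+i), bigF n ε y := by
    have hm : Measurable (fun y => wk n (k+3) (shift n (k+3) y)) :=
      (measurable_wk n (k+3)).comp (shift_mp n (k+3)).measurable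
    rw [← lintegral_const_mul _ hm]
    apply lintegral_mono
    intro y
    exact ENNReal.le_tsum (f := fun k : ℕ => ((k:ℝ≥0∞)+3)^(-ε) * Ak n (k+3) *
      wk n (k+3) (shift n (k+3) y)) k
  have h2 : ∫⁻ y in sCube n (k+3) ((k+3)*j+i), wk n (k+3) (shift n (k+3) y)
      = ∫⁻ y in Set.univ.pi (fun _ : Fin n => Set.Ico (0:ℝ) ((2:ℝ)^((k+3)*j+i))⁻¹),
        wk n (k+3) y := by
    rw [sCube_eq n _ _ (by omega)]
    exact (shift_mp n (k+3)).setLIntegral_comp_preimage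
      (MeasurableSet.univ_pi fun _ => measurableSet_Ico) (measurable_wk n (k+3))
  have h3 := lint_wk n (k+3) j i hi hik
  rw [← h2, ← vol_sCube n (k+3) _ (by omega)] at h3
  calc _ = (volume (sCube n (k+3) ((k+3)*j+i)))⁻¹ * volume (sCube n (k+3) ((k+3)*j+i)) *
        (((k:ℝ≥0∞)+3)^(-ε) * Ak n (k+3) * rk n (k+3)^(j+1)) := by
          rw [ENNReal.inv_mul_cancel hv hv', one_mul]
    _ = (volume (sCube n (k+3) ((k+3)*j+i)))⁻¹ * (((k:ℝ≥0∞)+3)^(-ε) * Ak n (k+3) *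
        (volume (sCube n (k+3) ((k+3)*j+i)) * rk n (k+3)^(j+1))) := by ring
    _ ≤ _ := by
      refine mul_le_mul_right ?_ _
      refine le_trans ?_ h1
      gcongr

lemma EE_sub_sCube (n k m i : ℕ) (hk : 1 ≤ k) (hik : i ≤ k) :
    EE n k (m+3) ⊆ sCube n k (k*(m+1)+i) := by
  rw [EE, sCube_eq n k _ hk, Q1_eq]
  apply Set.preimage_mono
  apply Set.pi_mono
  intro _ _ t ht
  have h0 : 0 ≤ ((2:ℝ)^(k*(m+2)+1))⁻¹ := by positivity
  refine ⟨h0.trans ht.1, lt_of_lt_of_le ht.2 ?_⟩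
  have a1 : ((2:ℝ)^(k*(m+2+1)))⁻¹ ≤ ((2:ℝ)^(k*(m+2)+1))⁻¹ :=
    inv_anti₀ (by positivity) (pow_le_pow_right₀ (by norm_num) (by nlinarith))
  have a2 : ((2:ℝ)^(k*(m+2)))⁻¹ ≤ ((2:ℝ)^(k*(m+1)+i))⁻¹ :=
    inv_anti₀ (by positivity) (pow_le_pow_right₀ (by norm_num) (by nlinarith))
  have a3 : ((2:ℝ)^(k*(m+2)+1))⁻¹ = ((2:ℝ)^(k*(m+2)))⁻¹ / 2 := by
    rw [pow_succ, mul_inv]; rfl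
  linarith

lemma TS_on (n k m : ℕ) (ε : ℝ) (x : Fin n → ℝ) (hx : x ∈ EE n (k+3) (m+3)) :
    ((2:ℝ≥0∞)^n)⁻¹ * ((k:ℝ≥0∞)+3)^(1-ε) * (Ak n (k+3) * rk n (k+3)^(m+3))
      ≤ TS (bigF n ε) x := by
  have hinj : Function.Injective (fun i : Fin (k+3) => (k+3, (k+3)*(m+1)+(i.1+1))) := by
    intro a b h
    simp only [Prod.mk.injEq, true_and] at h
    exact Fin.ext (by omega)
  refine le_trans ?_ (ENNReal.tsum_comp_le_tsum_of_injective hinj _)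
  rw [tsum_fintype]
  have hle : ∀ i ∈ (Finset.univ : Finset (Fin (k+3))),
      ((k:ℝ≥0∞)+3)^(-ε) * Ak n (k+3) * rk n (k+3)^(m+1+1) ≤
      (sCube n (k+3) ((k+3)*(m+1)+(i.1+1))).indicator
      (fun _ => (volume (sCube n (k+3) ((k+3)*(m+1)+(i.1+1))))⁻¹ *
        ∫⁻ y in sCube n (k+3) ((k+3)*(m+1)+(i.1+1)), bigF n ε y) x := by
    intro i _
    rw [Set.indicator_of_mem (EE_sub_sCube n (k+3) m (i.1+1) (by omega) (by omega) hx)]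
    exact avg_bigF n k (m+1) (i.1+1) ε (by omega) (by omega)
  refine le_trans ?_ (Finset.sum_le_sum hle)
  rw [Finset.sum_const, Finset.card_univ, Fintype.card_fin, nsmul_eq_mul]
  push_cast
  have hK : ((k:ℝ≥0∞)+3)^(1-ε) = ((k:ℝ≥0∞)+3) * ((k:ℝ≥0∞)+3)^(-ε) := by
    rw [sub_eq_add_neg, ENNReal.rpow_add _ _ (by simp) (by simp), ENNReal.rpow_one]
  have hr : ((2:ℝ≥0∞)^n)⁻¹ * rk n (k+3) ≤ 1 := by
    calc _ ≤ ((2:ℝ≥0∞)^n)⁻¹ * 2^n := by gcongr; exact rk_le n (k+3) (by omega)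
      _ = 1 := ENNReal.inv_mul_cancel (by positivity) (by simp)
  rw [hK]
  calc _ = (((2:ℝ≥0∞)^n)⁻¹ * rk n (k+3)) * (((k:ℝ≥0∞)+3) *
        (((k:ℝ≥0∞)+3)^(-ε) * Ak n (k+3) * rk n (k+3)^(m+1+1))) := by ring
    _ ≤ 1 * (((k:ℝ≥0∞)+3) *
        (((k:ℝ≥0∞)+3)^(-ε) * Ak n (k+3) * rk n (k+3)^(m+1+1))) := by gcongr
    _ = _ := one_mul _

lemma rpow_aux (b a : ℝ≥0∞) (q : ℝ) (hq : 0 ≤ q) (h0 : a ≠ 0) (ht : a ≠ ∞) :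
    (b * a)^q * a^(1-q) = b^q * a := by
  rw [ENNReal.mul_rpow_of_nonneg _ _ hq, mul_assoc, ← ENNReal.rpow_add _ _ h0 ht]
  simp

/-- For `n ≥ 1`, `p ∈ (1,∞)` with `p' = p/(p-1)` and `1/p' < ε < 1`:
`∫_{supp w} f^{p'} w^{1-p'} = Σ_{k ≥ 3} k^{-εp'} < ∞`, while
`∫_{supp w} (T_S f)^{p'} w^{1-p'} = ∞`. -/
theorem f_in_Lp_but_TSf_not (n : ℕ) (hn : 1 ≤ n) (p : ℝ) (hp : 1 < p)
    (ε : ℝ) (hε1 : 1 / (p/(p-1)) < ε) (hε2 : ε < 1) :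
    (∫⁻ x in {x | bigW n x ≠ 0}, bigF n ε x ^ (p/(p-1)) * bigW n x ^ (1 - p/(p-1))
        = ∑' k : ℕ, ((k : ℝ≥0∞) + 3) ^ (-(ε * (p/(p-1))))) ∧
    (∑' k : ℕ, ((k : ℝ≥0∞) + 3) ^ (-(ε * (p/(p-1)))) ≠ ∞) ∧
    (∫⁻ x in {x | bigW n x ≠ 0},
        TS (bigF n ε) x ^ (p/(p-1)) * bigW n x ^ (1 - p/(p-1)) = ∞) := by
  set q := p/(p-1) with hq
  have hp1 : 0 < p - 1 := by linarith
  have hq0 : 0 < q := div_pos (by linarith) hp1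
  have hεq : 1 < ε * q := by rwa [div_lt_iff₀ hq0] at hε1
  have ha0 : ∀ k m : ℕ, Ak n (k+3) * rk n (k+3)^(m+3) ≠ 0 := fun k m =>
    mul_ne_zero (Ak_ne_zero _ _) (pow_ne_zero _ (rk_ne_zero _ _))
  have hat : ∀ k m : ℕ, Ak n (k+3) * rk n (k+3)^(m+3) ≠ ∞ := fun k m =>
    ENNReal.mul_ne_top (Ak_ne_top _ _) (ENNReal.pow_ne_top (rk_ne_top _ _))
  refine ⟨?_, ?_, ?_⟩
  · rw [lint_supp n hn]
    refine tsum_congr fun k => ?_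
    have hterm : ∀ m : ℕ, ∫⁻ x in EE n (k+3) (m+3), bigF n ε x ^ q * bigW n x ^ (1-q)
        = ((k:ℝ≥0∞)+3)^(-(ε*q)) *
          (Ak n (k+3) * rk n (k+3)^(m+3) * (((2:ℝ≥0∞)^((k+3)*(m+3)))⁻¹)^n) := by
      intro m
      have : ∀ x ∈ EE n (k+3) (m+3), bigF n ε x ^ q * bigW n x ^ (1-q)
          = ((k:ℝ≥0∞)+3)^(-(ε*q)) * (Ak n (k+3) * rk n (k+3)^(m+3)) := by
        intro x hx
        rw [bigF_on n k m ε hn x hx, bigW_on n k m hn x hx,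
          rpow_aux _ _ q hq0.le (ha0 k m) (hat k m), ← ENNReal.rpow_mul, neg_mul]
      rw [setLIntegral_congr_fun (measurableSet_EE _ _ _) this, setLIntegral_const,
        vol_EE n (k+3) (m+2), mul_assoc]
    simp_rw [hterm]
    rw [ENNReal.tsum_mul_left, geom2 n (k+3) (by omega), mul_one]
  · have hs : Summable (fun k : ℕ => ((k:ℝ)+3)^(-(ε*q))) := by
      have h := (Real.summable_nat_rpow (p := -(ε*q))).2 (by linarith)
      have h' := (summable_nat_add_iff 3).2 h
      simpa using h'
    have he : ∀ k : ℕ, ((k:ℝ≥0∞)+3)^(-(ε*q)) = ENNReal.ofReal (((k:ℝ)+3)^(-(ε*q))) := by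
      intro k
      rw [← ENNReal.ofReal_rpow_of_pos (by positivity), ENNReal.ofReal_add (by positivity)
        (by norm_num)]
      simp
    simp_rw [he]
    exact hs.tsum_ofReal_ne_top
  · rw [lint_supp n hn, eq_top_iff]
    have hc0 : (((2:ℝ≥0∞)^n)⁻¹)^q ≠ 0 := by
      rw [Ne, ENNReal.rpow_eq_zero_iff_of_pos hq0]
      simp
    rw [← ENNReal.tsum_const_eq_top_of_ne_zero (α := ℕ) hc0]
    refine ENNReal.tsum_le_tsum fun k => ?_
    have hterm : ∀ m : ℕ, (((2:ℝ≥0∞)^n)⁻¹)^q *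
          (Ak n (k+3) * rk n (k+3)^(m+3) * (((2:ℝ≥0∞)^((k+3)*(m+3)))⁻¹)^n)
        ≤ ∫⁻ x in EE n (k+3) (m+3), TS (bigF n ε) x ^ q * bigW n x ^ (1-q) := by
      intro m
      rw [← vol_EE n (k+3) (m+2), ← mul_assoc, ← setLIntegral_const]
      refine setLIntegral_mono' (measurableSet_EE _ _ _) fun x hx => ?_
      rw [bigW_on n k m hn x hx, ← rpow_aux _ _ q hq0.le (ha0 k m) (hat k m)]
      gcongr
      refine le_trans ?_ (TS_on n k m ε x hx)
      gcongr
      refine le_mul_of_one_le_right' ?_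
      exact ENNReal.one_le_rpow (by
        calc (1:ℝ≥0∞) ≤ 3 := by norm_num
          _ ≤ _ := le_add_self) (by linarith)
    refine le_trans ?_ (ENNReal.tsum_le_tsum hterm)
    rw [ENNReal.tsum_mul_left, geom2 n (k+3) (by omega), mul_one]
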